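/- arXiv:1308.5081 — 3 statements merged into one kernel-verified Lean document; each statement's English description precedes it below -/
import Mathlib

section
/- Let f ∈ C(𝕋), k, l ∈ ℕ with k, l ≥ 1 and k ≠ l, and h > 0. Then W₂(f, χ_h^k) ≤ W₂(f, χ_h^l) + W₂(f, χ_h^{|l-k|}). -/
/-!
Write `T g = g * χ_h`. On bounded continuous functions `T` is linear, and it is a contraction for
the uniform norm because `χ_h ≥ 0` and `∫ χ_h = 1`. Associativity of convolution gives
`f * χ_h^n = T^n f` for `n ≥ 1` (`conv_chiPow`). With `d = |l - k|`, the inequality follows from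
* `f - T^k f = (f - T^l f) - T^k (f - T^d f)` when `l = k + d`,
* `f - T^k f = (f - T^l f) + T^l (f - T^d f)` when `k = l + d`,

the triangle inequality, and `‖T^n g‖ ≤ ‖g‖` applied to `g = f - T^d f`.
-/


open MeasureTheory Real

/-- Uniform (sup) norm of a real function. -/
noncomputable def unorm (f : ℝ → ℝ) : ℝ := ⨆ u : ℝ, |f u|

/-- Convolution of two real functions. -/
noncomputable def conv (f g : ℝ → ℝ) : ℝ → ℝ := fun t => ∫ u : ℝ, f u * g (t - u)

/-- Normalized characteristic function of `(-h/2, h/2)`. -/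
noncomputable def chi (h : ℝ) : ℝ → ℝ := fun t => if -h/2 < t ∧ t < h/2 then 1/h else 0

/-- Convolution powers `χ_h^k` (defined for `k ≥ 1`; junk value `0` at `k = 0`). -/
noncomputable def chiPow (h : ℝ) : ℕ → (ℝ → ℝ)
  | 0 => fun _ => 0
  | 1 => chi h
  | (k+2) => conv (chiPow h (k+1)) (chi h)

/-- Special modulus of continuity `W₂(f, χ_h^k) = ‖f - f*χ_h^k‖`. -/
noncomputable def W2 (f : ℝ → ℝ) (h : ℝ) (k : ℕ) : ℝ :=
  unorm (fun t => f t - conv f (chiPow h k) t)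

/-- `W₂*(f, χ_h^k) = sup_{0 < u ≤ h} W₂(f, χ_u^k)`. -/
noncomputable def W2star (f : ℝ → ℝ) (h : ℝ) (k : ℕ) : ℝ :=
  ⨆ u : Set.Ioc (0:ℝ) h, W2 f u.1 k

/-- Second Peetre K-functional: infimum over twice continuously differentiable
1-periodic functions `g` of `‖f - g‖ + h² ‖D²g‖`. -/
noncomputable def K2 (f : ℝ → ℝ) (h : ℝ) : ℝ :=
  ⨅ g : {g : ℝ → ℝ // ContDiff ℝ 2 g ∧ Function.Periodic g 1},
    unorm (fun t => f t - g.1 t) + h^2 * unorm (iteratedDeriv 2 g.1)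

/-- Generalized K-functional `K̃₂(f, h₁, h₂)`. -/
noncomputable def Ktilde2 (f : ℝ → ℝ) (h1 h2 : ℝ) : ℝ :=
  ⨅ p : {p : (ℝ → ℝ) × (ℝ → ℝ) //
      (ContDiff ℝ 1 p.1 ∧ Function.Periodic p.1 1) ∧
      (ContDiff ℝ 2 p.2 ∧ Function.Periodic p.2 1)},
    unorm (fun t => f t - p.1.1 t) + h1 * unorm (deriv (fun t => p.1.1 t - p.1.2 t))
      + h2^2 * unorm (iteratedDeriv 2 p.1.2)

/-- Classical second modulus of smoothness. -/
noncomputable def omega2 (f : ℝ → ℝ) (h : ℝ) : ℝ :=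
  ⨆ u : Set.Ioc (0:ℝ) h, ⨆ t : ℝ, |f (t + u.1) - 2 * f t + f (t - u.1)|

/-- `τ` is a real 1-periodic trigonometric polynomial of degree at most `n - 1`. -/
def IsTrigPolyDegLT (n : ℕ) (τ : ℝ → ℝ) : Prop :=
  ∃ a b : ℕ → ℝ, ∀ t : ℝ, τ t =
    ∑ j ∈ Finset.range n, (a j * Real.cos (2 * Real.pi * j * t) + b j * Real.sin (2 * Real.pi * j * t))

/-- Best approximation `E_{n-1}(f)` by trigonometric polynomials of degree at most `n-1`. -/
noncomputable def bestApprox (n : ℕ) (f : ℝ → ℝ) : ℝ :=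
  ⨅ τ : {τ : ℝ → ℝ // IsTrigPolyDegLT n τ}, unorm (fun t => f t - τ.1 t)

open scoped Convolution

/-- Bounded continuous real functions on `ℝ`. -/
def IsBddCont (g : ℝ → ℝ) : Prop := Continuous g ∧ ∃ M, ∀ x, |g x| ≤ M

/-- The averaging operator `g ↦ g * χ_h`. -/
noncomputable def avg (h : ℝ) (g : ℝ → ℝ) : ℝ → ℝ := conv g (chi h)

lemma conv_eq_convolution (f g : ℝ → ℝ) :
    conv f g = f ⋆[ContinuousLinearMap.mul ℝ ℝ, volume] g := rfl

lemma IsBddCont.sub {f g : ℝ → ℝ} (hf : IsBddCont f) (hg : IsBddCont g) :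
    IsBddCont (fun t => f t - g t) := by
  obtain ⟨hf, M, hM⟩ := hf
  obtain ⟨hg, N, hN⟩ := hg
  exact ⟨hf.sub hg, M + N, fun x => (abs_sub _ _).trans (add_le_add (hM x) (hN x))⟩

lemma IsBddCont.abs_le_unorm {g : ℝ → ℝ} (hg : IsBddCont g) (x : ℝ) : |g x| ≤ unorm g := by
  obtain ⟨_, M, hM⟩ := hg
  exact le_ciSup (f := fun u => |g u|) ⟨M, by rintro _ ⟨y, rfl⟩; exact hM y⟩ x

lemma chi_eq_indicator (h : ℝ) :
    chi h = (Set.Ioo (-h/2) (h/2)).indicator (fun _ => 1/h) := by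
  ext t
  simp [chi, Set.indicator_apply]

lemma integrable_chi (h : ℝ) : Integrable (chi h) := by
  rw [chi_eq_indicator, integrable_indicator_iff measurableSet_Ioo]
  exact integrableOn_const (by simp)

lemma chi_nonneg {h : ℝ} (hh : 0 < h) (t : ℝ) : 0 ≤ chi h t := by
  unfold chi
  split_ifs <;> positivity

lemma integral_chi {h : ℝ} (hh : 0 < h) : ∫ t, chi h t = 1 := by
  rw [chi_eq_indicator, integral_indicator_const _ measurableSet_Ioo, Measure.real,
    Real.volume_Ioo, ENNReal.toReal_ofReal (by linarith), smul_eq_mul]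
  field_simp
  norm_num

lemma integrable_chiPow (h : ℝ) (n : ℕ) : Integrable (chiPow h (n + 1)) := by
  induction n with
  | zero => exact integrable_chi h
  | succ n ih => exact ih.integrable_convolution (ContinuousLinearMap.mul ℝ ℝ) (integrable_chi h)

lemma IsBddCont.integrable_mul {g k : ℝ → ℝ} (hg : IsBddCont g) (hk : Integrable k) (t : ℝ) :
    Integrable (fun u => g u * k (t - u)) := by
  obtain ⟨hc, M, hM⟩ := hg
  exact (hk.comp_sub_left t).bdd_mul hc.aestronglyMeasurable (Filter.Eventually.of_forall hM)

lemma IsBddCont.continuous_avg {g : ℝ → ℝ} (hg : IsBddCont g) (h : ℝ) :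
    Continuous (avg h g) := by
  obtain ⟨hc, M, hM⟩ := hg
  rw [avg, conv_eq_convolution, ← convolution_flip]
  exact BddAbove.continuous_convolution_right_of_integrable _
    ⟨M, by rintro _ ⟨y, rfl⟩; exact hM y⟩ (integrable_chi h) hc

lemma abs_avg_le {h : ℝ} (hh : 0 < h) {g : ℝ → ℝ} {M : ℝ}
    (hM : ∀ x, |g x| ≤ M) (t : ℝ) : |avg h g t| ≤ M := by
  have hi : Integrable (fun u => M * chi h (t - u)) :=
    ((integrable_chi h).comp_sub_left t).const_mul M
  calc |avg h g t| ≤ ∫ u, M * chi h (t - u) := by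
        change ‖∫ u, g u * chi h (t - u)‖ ≤ _
        refine norm_integral_le_of_norm_le hi (Filter.Eventually.of_forall fun u => ?_)
        rw [Real.norm_eq_abs, abs_mul, abs_of_nonneg (chi_nonneg hh _)]
        exact mul_le_mul_of_nonneg_right (hM u) (chi_nonneg hh _)
    _ = M := by
        rw [integral_const_mul, integral_sub_left_eq_self (chi h), integral_chi hh, mul_one]

lemma abs_iterate_avg_le {h : ℝ} (hh : 0 < h) {g : ℝ → ℝ} {M : ℝ}
    (hM : ∀ x, |g x| ≤ M) (n : ℕ) : ∀ t, |(avg h)^[n] g t| ≤ M := by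
  induction n with
  | zero => exact hM
  | succ n ih =>
    rw [Function.iterate_succ_apply']
    exact abs_avg_le hh ih

lemma IsBddCont.iterate_avg {h : ℝ} (hh : 0 < h) {g : ℝ → ℝ} (hg : IsBddCont g) (n : ℕ) :
    IsBddCont ((avg h)^[n] g) := by
  induction n with
  | zero => exact hg
  | succ n ih =>
    rw [Function.iterate_succ_apply']
    obtain ⟨M, hM⟩ := ih.2
    exact ⟨ih.continuous_avg h, M, abs_avg_le hh hM⟩

lemma iterate_avg_sub {h : ℝ} (hh : 0 < h) {f g : ℝ → ℝ} (hf : IsBddCont f) (hg : IsBddCont g)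
    (n : ℕ) : (avg h)^[n] (fun t => f t - g t) =
      fun t => (avg h)^[n] f t - (avg h)^[n] g t := by
  induction n with
  | zero => rfl
  | succ n ih =>
    simp only [Function.iterate_succ_apply', ih]
    ext t
    simp only [avg, conv, sub_mul]
    exact integral_sub ((hf.iterate_avg hh n).integrable_mul (integrable_chi h) t)
      ((hg.iterate_avg hh n).integrable_mul (integrable_chi h) t)

lemma IsBddCont.conv_assoc {f k₁ k₂ : ℝ → ℝ} (hf : IsBddCont f) (h₁ : Integrable k₁)
    (h₂ : Integrable k₂) : conv f (conv k₁ k₂) = conv (conv f k₁) k₂ := by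
  have hf' : IsBddCont (fun x => ‖f x‖) := by
    obtain ⟨hc, M, hM⟩ := hf
    exact ⟨hc.norm, M, fun x => by simpa using hM x⟩
  ext t
  refine (convolution_assoc (ContinuousLinearMap.mul ℝ ℝ) (ContinuousLinearMap.mul ℝ ℝ)
    (ContinuousLinearMap.mul ℝ ℝ) (ContinuousLinearMap.mul ℝ ℝ)
    (fun x y z => mul_assoc x y z) hf.1.aestronglyMeasurable h₁.aestronglyMeasurable
    h₂.aestronglyMeasurable (Filter.Eventually.of_forall fun y => hf.integrable_mul h₁ y)
    (h₁.norm.ae_convolution_exists _ h₂.norm) ?_).symm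
  exact hf'.integrable_mul (h₁.norm.integrable_convolution _ h₂.norm) t

lemma conv_chiPow {h : ℝ} {f : ℝ → ℝ} (hf : IsBddCont f) {n : ℕ} (hn : 1 ≤ n) :
    conv f (chiPow h n) = (avg h)^[n] f := by
  induction n, hn using Nat.le_induction with
  | base => rfl
  | succ n hn ih =>
    obtain ⟨m, rfl⟩ := Nat.exists_eq_add_of_le' hn
    rw [Function.iterate_succ_apply', ← ih]
    exact hf.conv_assoc (integrable_chiPow h m) (integrable_chi h)

/-- Lemma 1, inequality (2.4): `W₂(f, χ_h^k) ≤ W₂(f, χ_h^l) + W₂(f, χ_h^{|l-k|})`. -/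
theorem stmt11 (f : ℝ → ℝ) (hf : Continuous f) (hper : Function.Periodic f 1)
    (k l : ℕ) (hk : 1 ≤ k) (hl : 1 ≤ l) (hkl : k ≠ l) (h : ℝ) (hh : 0 < h) :
    W2 f h k ≤ W2 f h l + W2 f h (Nat.dist l k) := by
  have hfb : IsBddCont f := by
    obtain ⟨M, hM⟩ := (hper.isBounded_of_continuous one_ne_zero hf).exists_norm_le
    exact ⟨hf, M, fun x => hM _ ⟨x, rfl⟩⟩
  have hW : ∀ n, 1 ≤ n → W2 f h n = unorm (fun t => f t - (avg h)^[n] f t) := fun n hn => by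
    rw [W2, conv_chiPow hfb hn]
  have hbd : ∀ n, IsBddCont (fun t => f t - (avg h)^[n] f t) := fun n =>
    hfb.sub (hfb.iterate_avg hh n)
  have hd : 1 ≤ Nat.dist l k := Nat.dist_pos_of_ne hkl.symm
  -- `‖T^m f - T^(m+n) f‖ = ‖T^m (f - T^n f)‖ ≤ ‖f - T^n f‖`
  have hshift : ∀ m n t, |(avg h)^[m] f t - (avg h)^[m + n] f t| ≤
      unorm (fun t => f t - (avg h)^[n] f t) := fun m n t => by
    have := abs_iterate_avg_le hh (hbd n).abs_le_unorm m t
    rwa [iterate_avg_sub hh hfb (hfb.iterate_avg hh n), ← Function.iterate_add_apply] at this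
  rw [hW k hk, hW l hl, hW _ hd]
  refine ciSup_le fun t => ?_
  have h1 := (hbd l).abs_le_unorm t
  have h2 : |(avg h)^[l] f t - (avg h)^[k] f t| ≤
      unorm (fun t => f t - (avg h)^[Nat.dist l k] f t) := by
    rcases le_total k l with hle | hle
    · have := hshift k (Nat.dist l k) t
      rwa [Nat.dist_eq_sub_of_le_right hle, Nat.add_sub_cancel' hle, abs_sub_comm,
        ← Nat.dist_eq_sub_of_le_right hle] at this
    · have := hshift l (Nat.dist l k) t
      rwa [Nat.dist_eq_sub_of_le hle, Nat.add_sub_cancel' hle,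
        ← Nat.dist_eq_sub_of_le hle] at this
  exact (abs_sub_le _ _ _).trans (add_le_add h1 h2)
end

section
/- Let g ∈ C²(𝕋) and h > 0. Then W₂(g, χ_h²) ≤ (h²/12)·‖D²g‖. -/
/-!
Write `M = ‖D²g‖`. The kernel `χ_h²` is the even tent `(h - |s|)⁺ / h²`, of total mass one, so the
convolution can be symmetrized:
`(g * χ_h²)(t) - g(t) = ∫₀ʰ (g(t + s) + g(t - s) - 2 g(t)) (h - s) / h² ds`.
The second difference is at most `M s²` in absolute value (`abs_second_difference_le`, from two
applications of the mean value inequality), and `∫₀ʰ s² (h - s) / h² ds = h² / 12`.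
Periodicity enters only to make `D²g` bounded, so that the real supremum defining
`M` is not a junk value.
-/

open MeasureTheory Real

/-- The kernel `χ_h * χ_h` is the tent function: up to the factor `1 / h²` it is the length of the
overlap of two intervals of length `h` whose centres are at distance `|s|`. -/
lemma chiPow_two (h : ℝ) (hh : 0 < h) (s : ℝ) :
    chiPow h 2 s = max (h - |s|) 0 / h ^ 2 := by
  have e : (fun v => chi h v * chi h (s - v)) =
      (Set.Ioo (max (-h / 2) (s - h / 2)) (min (h / 2) (s + h / 2))).indicator
        (fun _ => 1 / h ^ 2) := by
    funext v
    rw [← Set.Ioo_inter_Ioo]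
    by_cases h1 : -h / 2 < v ∧ v < h / 2
    · by_cases h2 : -h / 2 < s - v ∧ s - v < h / 2
      · rw [Set.indicator_of_mem]
        · simp only [chi, if_pos h1, if_pos h2]
          field_simp
        · exact ⟨h1, by constructor <;> linarith [h2.1, h2.2]⟩
      · rw [Set.indicator_of_notMem]
        · simp [chi, if_neg h2]
        · exact fun hv => h2 ⟨by linarith [hv.2.2], by linarith [hv.2.1]⟩
    · rw [Set.indicator_of_notMem]
      · simp [chi, if_neg h1]
      · exact fun hv => h1 hv.1
  change (∫ v : ℝ, chi h v * chi h (s - v)) = _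
  rw [e, integral_indicator measurableSet_Ioo, setIntegral_const, Measure.real, Real.volume_Ioo,
    ENNReal.toReal_ofReal', smul_eq_mul, mul_one_div]
  congr 2
  rcases le_total 0 s with hs | hs
  · rw [abs_of_nonneg hs, min_eq_left (by linarith), max_eq_right (by linarith)]; ring
  · rw [abs_of_nonpos hs, min_eq_right (by linarith), max_eq_left (by linarith)]; ring

lemma abs_second_difference_le (g : ℝ → ℝ) (hg : ContDiff ℝ 2 g) (M : ℝ)
    (hM : ∀ u, |deriv (deriv g) u| ≤ M) (t s : ℝ) (hs : 0 ≤ s) :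
    |g (t + s) + g (t - s) - 2 * g t| ≤ M * s ^ 2 := by
  have hd : Differentiable ℝ g := hg.differentiable (by norm_num)
  have hg1 : ContDiff ℝ 1 (deriv g) := (contDiff_succ_iff_deriv (n := 1)).1 hg |>.2.2
  have hd1 : Differentiable ℝ (deriv g) := hg1.differentiable (by norm_num)
  have hder : ∀ x : ℝ, HasDerivAt (fun x => g (t + x) + g (t - x) - 2 * g t)
      (deriv g (t + x) - deriv g (t - x)) x := fun x => by
    have h1 := (hd (t + x)).hasDerivAt.comp_const_add t x
    have h2 := (hd (t - x)).hasDerivAt.comp_const_sub t x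
    simpa [sub_eq_add_neg] using (h1.add h2).sub_const (2 * g t)
  have hB : ∀ x : ℝ, HasDerivAt (fun x => M * x ^ 2) (M * (2 * x)) x := fun x => by
    simpa using (hasDerivAt_pow 2 x).const_mul M
  have := image_norm_le_of_norm_deriv_right_le_deriv_boundary (a := 0) (b := s)
    (f := fun x => g (t + x) + g (t - x) - 2 * g t)
    (f' := fun x => deriv g (t + x) - deriv g (t - x))
    (B := fun x => M * x ^ 2) (B' := fun x => M * (2 * x))
    (fun x _ => (hder x).continuousAt.continuousWithinAt)
    (fun x _ => (hder x).hasDerivWithinAt)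
    (by simp [two_mul]) hB
    (fun x hx => by
      have := Convex.norm_image_sub_le_of_norm_deriv_le (f := deriv g) (C := M)
        (fun x _ => hd1 x) (fun x _ => hM x) convex_univ (Set.mem_univ (t - x))
        (Set.mem_univ (t + x))
      rw [show t + x - (t - x) = 2 * x by ring,
        Real.norm_of_nonneg (mul_nonneg zero_le_two hx.1)] at this
      exact this)
    (x := s) ⟨hs, le_rfl⟩
  exact this

/-- The symmetrized form of the convolution with the tent kernel. -/
lemma conv_chiPow_two (g : ℝ → ℝ) (hg : Continuous g) (h : ℝ) (hh : 0 < h) (t : ℝ) :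
    conv g (chiPow h 2) t = ∫ s in (0 : ℝ)..h, (g (t + s) + g (t - s)) * ((h - s) / h ^ 2) := by
  have hc : Continuous fun s => g (t - s) * (max (h - |s|) 0 / h ^ 2) := by fun_prop
  have e1 : conv g (chiPow h 2) t = ∫ s, g (t - s) * (max (h - |s|) 0 / h ^ 2) := by
    rw [← integral_sub_left_eq_self _ _ t]
    simp [conv, chiPow_two h hh]
  have e2 : (∫ s, g (t - s) * (max (h - |s|) 0 / h ^ 2)) =
      ∫ s in (-h)..h, g (t - s) * (max (h - |s|) 0 / h ^ 2) := by
    symm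
    apply intervalIntegral.integral_eq_integral_of_support_subset
    intro s hs
    by_contra hn
    apply hs
    have : h ≤ |s| := by
      by_contra! hlt
      exact hn ⟨(abs_lt.1 hlt).1, (abs_lt.1 hlt).2.le⟩
    simp [max_eq_right (sub_nonpos.2 this)]
  rw [e1, e2, ← intervalIntegral.integral_add_adjacent_intervals
    (hc.intervalIntegrable (-h) 0) (hc.intervalIntegrable 0 h)]
  have e3 : (∫ s in (-h)..0, g (t - s) * (max (h - |s|) 0 / h ^ 2)) =
      ∫ s in (0 : ℝ)..h, g (t + s) * (max (h - |s|) 0 / h ^ 2) := by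
    simpa using (intervalIntegral.integral_comp_neg (a := 0) (b := h)
      fun s => g (t - s) * (max (h - |s|) 0 / h ^ 2)).symm
  have hc' : Continuous fun s => g (t + s) * (max (h - |s|) 0 / h ^ 2) := by fun_prop
  rw [e3, ← intervalIntegral.integral_add (hc'.intervalIntegrable 0 h)
    (hc.intervalIntegrable 0 h)]
  refine intervalIntegral.integral_congr fun s hs => ?_
  rw [Set.uIcc_of_le hh.le] at hs
  simp only [abs_of_nonneg hs.1, max_eq_left (sub_nonneg.2 hs.2)]
  ring

/-- The moments of the half-tent that are needed: mass `1 / 2` and second moment `h² / 12`. -/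
lemma tent_moments (h : ℝ) (hh : 0 < h) :
    (∫ s in (0 : ℝ)..h, (h - s) / h ^ 2) = 1 / 2 ∧
      (∫ s in (0 : ℝ)..h, s ^ 2 * ((h - s) / h ^ 2)) = h ^ 2 / 12 := by
  constructor
  · rw [intervalIntegral.integral_div, intervalIntegral.integral_sub
      (by simp) (by simp)]
    simp
    field_simp
    ring
  · have : ∀ s : ℝ, s ^ 2 * ((h - s) / h ^ 2) = (h * s ^ 2 - s ^ 3) / h ^ 2 := fun s => by ring
    simp only [this]
    rw [intervalIntegral.integral_div, intervalIntegral.integral_sub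
      (Continuous.intervalIntegrable (by fun_prop) _ _)
      (Continuous.intervalIntegrable (by fun_prop) _ _),
      intervalIntegral.integral_const_mul, integral_pow, integral_pow]
    norm_num
    field_simp
    ring

/-- Lemma 1, inequality (2.8): `W₂(g, χ_h²) ≤ (h²/12)·‖D²g‖`. -/
theorem stmt15 (g : ℝ → ℝ) (hg : ContDiff ℝ 2 g) (hper : Function.Periodic g 1)
    (h : ℝ) (hh : 0 < h) :
    W2 g h 2 ≤ (h^2 / 12) * unorm (iteratedDeriv 2 g) := by
  have hcont : Continuous g := hg.continuous
  have hc2 : Continuous (iteratedDeriv 2 g) := hg.continuous_iteratedDeriv 2 le_rfl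
  have hper' : ∀ f : ℝ → ℝ, Function.Periodic f 1 → Function.Periodic (deriv f) 1 := by
    intro f hf x
    rw [← deriv_comp_add_const, show (fun x => f (x + 1)) = f from funext hf]
  have hp2 : Function.Periodic (iteratedDeriv 2 g) 1 := by
    rw [iteratedDeriv_succ, iteratedDeriv_one]
    exact hper' _ (hper' _ hper)
  have hbdd : BddAbove (Set.range fun u => |iteratedDeriv 2 g u|) := by
    obtain ⟨C, hC⟩ := (hp2.isBounded_of_continuous one_ne_zero hc2).exists_norm_le
    exact ⟨C, by rintro _ ⟨u, rfl⟩; exact hC _ ⟨u, rfl⟩⟩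
  set M := unorm (iteratedDeriv 2 g) with hMdef
  have hM : ∀ u, |deriv (deriv g) u| ≤ M := fun u => by
    have : |iteratedDeriv 2 g u| ≤ M := le_ciSup hbdd u
    rwa [iteratedDeriv_succ, iteratedDeriv_one] at this
  refine ciSup_le fun t => ?_
  obtain ⟨m0, m2⟩ := tent_moments h hh
  have e : conv g (chiPow h 2) t - g t =
      ∫ s in (0 : ℝ)..h, (g (t + s) + g (t - s) - 2 * g t) * ((h - s) / h ^ 2) := by
    simp only [sub_mul _ (2 * g t)]
    rw [intervalIntegral.integral_sub
      (Continuous.intervalIntegrable (by fun_prop) _ _)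
      (Continuous.intervalIntegrable (by fun_prop) _ _),
      intervalIntegral.integral_const_mul, m0, conv_chiPow_two g hcont h hh]
    ring
  rw [abs_sub_comm, e, ← Real.norm_eq_abs, ← m2, mul_comm _ M,
    ← intervalIntegral.integral_const_mul]
  refine intervalIntegral.norm_integral_le_of_norm_le hh.le
    (Filter.Eventually.of_forall fun s hs => ?_)
    (Continuous.intervalIntegrable (by fun_prop) _ _)
  have hw : 0 ≤ (h - s) / h ^ 2 := div_nonneg (sub_nonneg.2 hs.2) (sq_nonneg h)
  rw [norm_mul, Real.norm_of_nonneg hw, ← mul_assoc]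
  exact mul_le_mul_of_nonneg_right (abs_second_difference_le g hg M hM t s hs.1.le) hw
end

section
/- Let f ∈ C²(𝕋), α > 0, and n ∈ ℕ with n ≥ 1. Then E_{n-1}(f) ≤ (1/(32n²))·(1 + 2α²/3)·‖D²f‖. -/
/-!
The bound holds already without the factor `1 + 2α²/3 ≥ 1`: this is Favard's inequality for the
second derivative (`favard`).

A periodic `C²` function satisfies `f(t) = ∫ f - ½ ∫ B₂(u) f''(t - u) du` over one period
(`eq_integral_add_integral_deriv2`), where `B₂` is the second Bernoulli polynomial. Replacing `B₂(u)`
by a cosine polynomial `T(u)` of degree at most `n - 1` gives a trigonometric polynomial of degree at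
most `n - 1`, whose distance from `f` is at most `½ ‖B₂ - T‖₁ ‖f''‖`. It remains to find `T` with
`‖B₂ - T‖₁ = 1 / (16 n²)` (`integral_abs_bernoulli_sub`).

Take for `T` the polynomial in `cos 2πu` interpolating `B₂` at the zeros of `cos 2πnu`. Then `B₂ - T` has
the sign of `cos 2πnu` on `[0, 1]` (`bernInterp_sign`): since `π² B₂(u) = ∑ cos(2πku) / k²` and
`1 / k² = ∫ x e^{-kx} dx` over `(0, ∞)`, the function `B₂` is a positive superposition of Poisson kernels
(`nonneg_tsum_div_sq`), and for a Poisson kernel the interpolation error is explicitly a positive multiple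
of `cos 2πnu` (`interp_poisson`). Hence `‖B₂ - T‖₁ = ∫ (B₂ - T) sgn cos 2πnu`. The square wave is
orthogonal to `T` (`integral_cos_sqWave`), and its integral against `B₂` follows from the
multiplication formula for Bernoulli polynomials (`integral_bernoulli_sqWave_mul`).
-/

open MeasureTheory Real

open Polynomial.Chebyshev (T)

/-! ### Superposition of Poisson kernels -/

/-- The weights `1 / k²` are a positive superposition of geometric weights,
`1 / k² = ∫ x in (0, ∞), x * exp (-k x)`, so nonnegativity of every Abel mean `∑ l_k r^k` passes
to `∑ l_k / k²`. The index is shifted so that `k` starts at `1`. -/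
lemma nonneg_tsum_div_sq (l : ℕ → ℝ) (M : ℝ) (hM : ∀ k, |l k| ≤ M)
    (hpos : ∀ r : ℝ, 0 < r → r < 1 → 0 ≤ ∑' k, l k * r ^ (k + 1)) :
    0 ≤ ∑' k : ℕ, l k * (1 / ((k : ℝ) + 1) ^ 2) := by
  have key : ∀ k : ℕ, ∫ x in Set.Ioi (0:ℝ), x * rexp (-(((k : ℝ) + 1) * x)) =
      1 / ((k : ℝ) + 1) ^ 2 := by
    intro k
    have h := Real.integral_rpow_mul_exp_neg_mul_Ioi (a := 2) (r := (k : ℝ) + 1) (by norm_num)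
      (by positivity)
    norm_num at h
    simpa using h
  have hInt : ∀ k : ℕ, IntegrableOn (fun x : ℝ => x * rexp (-(((k : ℝ) + 1) * x)))
      (Set.Ioi 0) := by
    intro k
    by_contra hc
    have h1 := integral_undef hc
    rw [key k] at h1
    have : (0:ℝ) < 1 / ((k : ℝ) + 1) ^ 2 := by positivity
    linarith
  have hs2 : Summable fun k : ℕ => 1 / ((k : ℝ) + 1) ^ 2 := by
    have := (summable_nat_add_iff 1).2 (Real.summable_one_div_nat_pow (p := 2) |>.2 (by norm_num))
    simpa using this
  have hnorm : ∀ k : ℕ, ∫ x in Set.Ioi (0:ℝ), ‖l k * (x * rexp (-(((k : ℝ) + 1) * x)))‖ =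
      |l k| * (1 / ((k : ℝ) + 1) ^ 2) := by
    intro k
    rw [← key k, ← integral_const_mul]
    refine setIntegral_congr_fun measurableSet_Ioi fun x hx => ?_
    have hx' : (0:ℝ) < x := hx
    simp [abs_of_pos hx', abs_of_pos (Real.exp_pos _)]
  have h := hasSum_integral_of_summable_integral_norm (μ := volume.restrict (Set.Ioi (0:ℝ)))
    (F := fun (k : ℕ) (x : ℝ) => l k * (x * rexp (-(((k : ℝ) + 1) * x))))
    (fun k => (hInt k).const_mul _) (by
      simp_rw [hnorm]
      refine Summable.of_nonneg_of_le (fun k => by positivity) (fun k => ?_) (hs2.mul_left M)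
      gcongr
      exact hM k)
  simp_rw [integral_const_mul, key] at h
  rw [h.tsum_eq]
  refine setIntegral_nonneg measurableSet_Ioi fun x hx => ?_
  have hx' : (0:ℝ) < x := hx
  have := hpos (rexp (-x)) (Real.exp_pos _) (by simpa using hx')
  have e : (fun k : ℕ => l k * (x * rexp (-(((k : ℝ) + 1) * x)))) =
      fun k : ℕ => x * (l k * rexp (-x) ^ (k + 1)) := by
    funext k
    rw [← Real.exp_nat_mul]
    push_cast
    rw [show ((k:ℝ) + 1) * -x = -(((k : ℝ) + 1) * x) by ring]
    ring
  rw [e, tsum_mul_left]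
  positivity

lemma poisson_denom_pos {r : ℝ} (h0 : 0 < r) (h1 : r < 1) {x : ℝ} (hx : x ≤ 1) :
    0 < 1 - 2 * r * x + r ^ 2 := by
  nlinarith [mul_nonneg h0.le (sub_nonneg.2 hx), sq_pos_of_pos (sub_pos.2 h1)]

/-- The Poisson kernel in closed form, as the real part of the geometric series of `r e^{iθ}`. -/
lemma hasSum_poisson {r : ℝ} (h0 : 0 < r) (h1 : r < 1) (θ : ℝ) :
    HasSum (fun k : ℕ => Real.cos (((k : ℝ) + 1) * θ) * r ^ (k + 1))
      ((r * Real.cos θ - r ^ 2) / (1 - 2 * r * Real.cos θ + r ^ 2)) := by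
  set z : ℂ := r * Complex.exp (θ * Complex.I) with hz
  have hzn : ‖z‖ < 1 := by
    rw [hz, norm_mul, Complex.norm_exp_ofReal_mul_I]
    simpa [abs_of_pos h0] using h1
  have h := Complex.hasSum_re ((hasSum_geometric_of_norm_lt_one hzn).mul_left z)
  convert h using 1
  · funext k
    have : z * z ^ k = ((r ^ (k + 1) : ℝ) : ℂ) * Complex.exp (((((k:ℝ) + 1) * θ : ℝ) : ℂ) * Complex.I) := by
      rw [← pow_succ', hz, mul_pow, ← Complex.exp_nat_mul]
      push_cast
      ring_nf
    rw [this, Complex.re_ofReal_mul, Complex.exp_ofReal_mul_I_re, mul_comm]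
  · have hre : z.re = r * Real.cos θ := by
      rw [hz, Complex.re_ofReal_mul, Complex.exp_ofReal_mul_I_re]
    have him : z.im = r * Real.sin θ := by
      rw [hz, Complex.im_ofReal_mul, Complex.exp_ofReal_mul_I_im]
    have hd := poisson_denom_pos h0 h1 (Real.cos_le_one θ)
    have hsq := Real.sin_sq_add_cos_sq θ
    have hns : Complex.normSq (1 - z) = 1 - 2 * r * Real.cos θ + r ^ 2 := by
      rw [Complex.normSq_apply]
      simp only [Complex.sub_re, Complex.one_re, Complex.sub_im, Complex.one_im, hre, him]
      linear_combination r ^ 2 * hsq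
    rw [Complex.mul_re, Complex.inv_re, Complex.inv_im, hns, hre, him]
    simp only [Complex.sub_re, Complex.one_re, Complex.sub_im, Complex.one_im, hre, him]
    rw [← sub_eq_zero]
    have e : ∀ D : ℝ, (r * Real.cos θ - r ^ 2) / D - (r * Real.cos θ * ((1 - r * Real.cos θ) / D)
        - r * Real.sin θ * (-(0 - r * Real.sin θ) / D))
        = r ^ 2 * ((Real.sin θ ^ 2 + Real.cos θ ^ 2) - 1) / D := fun D => by ring
    rw [e, hsq]
    simp

/-- Error of interpolating the Poisson kernel at the zeros of `cos (n θ)` by a cosine polynomial of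
degree less than `n`: it is an explicit positive multiple of `cos (n θ)`. In the variable
`y = cos θ` the kernel is a linear polynomial over `1 - 2 r y + r²`; subtracting the multiple of `T_n`
that makes the numerator vanish at the pole `b = (1 + r²) / (2 r)` leaves a polynomial of degree less
than `n`, which agrees with the kernel at the zeros of `T_n`. -/
lemma interp_poisson {n : ℕ} (hn : 1 ≤ n) {r : ℝ} (h0 : 0 < r) (h1 : r < 1) (x : ℕ → ℝ)
    (hx : ∀ i, x i = Real.cos ((2 * i + 1) * π / (2 * n))) :
    ∃ c : ℝ, 0 < c ∧ ∀ θ : ℝ,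
      (r * Real.cos θ - r ^ 2) / (1 - 2 * r * Real.cos θ + r ^ 2) -
        (Lagrange.interpolate (Finset.range n) x
          (fun i => (r * x i - r ^ 2) / (1 - 2 * r * x i + r ^ 2))).eval (Real.cos θ)
      = c * Real.cos (n * θ) / (1 - 2 * r * Real.cos θ + r ^ 2) := by
  have hn' : (n : ℝ) ≠ 0 := by positivity
  have hinj : Set.InjOn x (Finset.range n) := by
    have := (Finset.range n).nodup_map_iff_injOn.mp (Polynomial.Chebyshev.roots_T_real_nodup n)
    intro i hi j hj hij
    rw [hx, hx] at hij
    exact this hi hj hij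
  set b : ℝ := (1 + r ^ 2) / (2 * r) with hb
  -- The pole lies outside `(-1, 1)`, where `T_n ≥ 1`; this makes `c` positive.
  have hb1 : 1 ≤ b := by
    rw [hb, le_div_iff₀ (by positivity)]
    nlinarith [sq_nonneg (1 - r)]
  have hTb : 0 < (T ℝ n).eval b :=
    lt_of_lt_of_le one_pos (Polynomial.Chebyshev.one_le_eval_T_real n hb1)
  set c : ℝ := (1 - r ^ 2) / 2 / (T ℝ n).eval b with hc
  have hcpos : 0 < c := by
    have : 0 < 1 - r ^ 2 := by nlinarith
    positivity
  open Polynomial in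
  have hdvd : (X - C b) ∣ (C r * X - C (r ^ 2) - C c * T ℝ n : ℝ[X]) := by
    rw [dvd_iff_isRoot, IsRoot.def]
    simp only [eval_sub, eval_mul, eval_C, eval_X]
    rw [hc, div_mul_cancel₀ _ hTb.ne', hb]
    field_simp
    ring
  obtain ⟨Q, hQ⟩ := hdvd
  have hQe : ∀ y : ℝ, (1 - 2 * r * y + r ^ 2) * (Q.eval y * (-1 / (2 * r))) =
      r * y - r ^ 2 - c * (T ℝ n).eval y := by
    intro y
    have := congrArg (Polynomial.eval y) hQ
    simp only [Polynomial.eval_sub, Polynomial.eval_mul, Polynomial.eval_C, Polynomial.eval_X] at this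
    rw [this, hb]
    field_simp
    ring
  open Polynomial in
  have hQdeg : Q.degree < n := by
    by_cases hQ0 : Q = 0
    · simp [hQ0]
    have h2 : (C r * X - C (r ^ 2) - C c * T ℝ n : ℝ[X]).degree ≤ n := by
      refine (degree_sub_le _ _).trans (max_le ((degree_sub_le _ _).trans (max_le ?_ ?_)) ?_)
      · refine (degree_C_mul_X_le r).trans ?_
        exact_mod_cast hn
      · exact degree_C_le.trans (by exact_mod_cast Nat.zero_le n)
      · refine (degree_C_mul hcpos.ne').le.trans ?_
        rw [Chebyshev.degree_T]
        simp
    rw [hQ, degree_mul, degree_X_sub_C, degree_eq_natDegree hQ0] at h2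
    rw [degree_eq_natDegree hQ0]
    have h3 : 1 + Q.natDegree ≤ n := by exact_mod_cast h2
    exact_mod_cast (by omega : Q.natDegree < n)
  have hden : ∀ y : ℝ, y ≤ 1 → 1 - 2 * r * y + r ^ 2 ≠ 0 := fun y hy =>
    (poisson_denom_pos h0 h1 hy).ne'
  have hI : Polynomial.C (-1 / (2 * r)) * Q = Lagrange.interpolate (Finset.range n) x
          (fun i => (r * x i - r ^ 2) / (1 - 2 * r * x i + r ^ 2)) := by
    refine Lagrange.eq_interpolate_of_eval_eq _ hinj ?_ ?_
    · rw [Polynomial.degree_C_mul (by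
        have : r ≠ 0 := h0.ne'
        simp [this]), Finset.card_range]
      exact hQdeg
    · intro i hi
      have h3 := hQe (x i)
      have hroot : (T ℝ n).eval (x i) = 0 := by
        rw [hx, Polynomial.Chebyshev.T_real_cos, Real.cos_eq_zero_iff]
        refine ⟨i, ?_⟩
        push_cast
        field_simp
      rw [hroot, mul_zero, sub_zero] at h3
      rw [Polynomial.eval_mul, Polynomial.eval_C, eq_div_iff (hden _ (by rw [hx]; exact Real.cos_le_one _)),
        ← h3]
      ring
  refine ⟨c, hcpos, fun θ => ?_⟩
  have h3 := hQe (Real.cos θ)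
  have h4 := hden _ (Real.cos_le_one θ)
  rw [Polynomial.Chebyshev.T_real_cos, Int.cast_natCast] at h3
  rw [← hI, Polynomial.eval_mul, Polynomial.eval_C]
  rw [sub_eq_iff_eq_add, div_eq_iff h4, add_mul, div_mul_cancel₀ _ h4]
  linarith

/-! ### Interpolation of the Bernoulli polynomial -/

/-- Fourier series `π² B₂(u) = ∑_{k ≥ 1} cos (2π k u) / k²` on `[0, 1]`. -/
lemma hasSum_bernoulli_two {u : ℝ} (hu : u ∈ Set.Icc (0:ℝ) 1) :
    HasSum (fun k : ℕ => Real.cos (((k : ℝ) + 1) * (2 * π * u)) * (1 / ((k : ℝ) + 1) ^ 2))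
      (π ^ 2 * bernoulliFun 2 u) := by
  have h := hasSum_one_div_nat_pow_mul_cos (k := 1) one_ne_zero hu
  rw [← hasSum_nat_add_iff' 1] at h
  convert! h using 1
  · funext k
    push_cast
    rw [mul_comm]
    ring_nf
  · change _ = (-1 : ℝ) ^ (1 + 1) * (2 * π) ^ (2 * 1) / 2 / ↑(2 * 1).factorial *
      bernoulliFun 2 u - _
    norm_num [Nat.factorial]
    left
    ring

/-- The polynomial `P` of degree less than `n` for which `P (cos 2πu)` agrees with `B₂(u)` at the nodes
`u = (2 i + 1) / (4 n)`, `i < n`, which are the zeros of `cos (2π n u)` in `[0, 1/2]`; their cosines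
are the Chebyshev nodes. -/
noncomputable def bernInterp (n : ℕ) : Polynomial ℝ :=
  Lagrange.interpolate (Finset.range n) (fun i : ℕ => Real.cos ((2 * i + 1) * π / (2 * n)))
    (fun i : ℕ => bernoulliFun 2 ((2 * i + 1) / (4 * n)))

/-- The interpolation error of `B₂` has the sign of `cos (2π n u)`. Interpolation is linear, so the
error is the superposition, with positive weights, of the errors for Poisson kernels. The factor `s`
treats both signs, and the zeros, at once. -/
lemma bernInterp_sign {n : ℕ} (hn : 1 ≤ n) {u : ℝ} (hu : u ∈ Set.Icc (0:ℝ) 1) {s : ℝ}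
    (hs : 0 ≤ s * Real.cos (2 * π * n * u)) :
    0 ≤ s * (bernoulliFun 2 u - (bernInterp n).eval (Real.cos (2 * π * u))) := by
  have hn0 : (0:ℝ) < n := by exact_mod_cast hn
  set θ : ℝ := 2 * π * u with hθ
  set x : ℕ → ℝ := fun i : ℕ => Real.cos ((2 * i + 1) * π / (2 * n)) with hx
  set y : ℕ → ℝ := fun i : ℕ => (2 * i + 1) / (4 * n) with hy
  have hxy : ∀ i, x i = Real.cos (2 * π * y i) := by
    intro i
    simp only [hx, hy]
    congr 1
    field_simp
    ring
  have hyI : ∀ i ∈ Finset.range n, y i ∈ Set.Icc (0:ℝ) 1 := by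
    intro i hi
    have h1 : (i:ℝ) + 1 ≤ n := by exact_mod_cast Finset.mem_range.1 hi
    refine ⟨by positivity, ?_⟩
    simp only [hy]
    rw [div_le_one (by positivity)]
    linarith
  set w : ℕ → ℝ := fun i => (Lagrange.basis (Finset.range n) x i).eval (Real.cos θ) with hw
  have heval : ∀ v : ℕ → ℝ, (Lagrange.interpolate (Finset.range n) x v).eval (Real.cos θ) =
      ∑ i ∈ Finset.range n, v i * w i := by
    intro v
    simp [Lagrange.interpolate_apply, Polynomial.eval_finsetSum, hw]
  set l : ℕ → ℝ := fun k => s * (Real.cos (((k : ℝ) + 1) * θ) -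
    ∑ i ∈ Finset.range n, Real.cos (((k : ℝ) + 1) * (2 * π * y i)) * w i) with hl
  have hbound : ∀ k, |l k| ≤ |s| * (1 + ∑ i ∈ Finset.range n, |w i|) := by
    intro k
    rw [hl, abs_mul]
    gcongr
    refine (abs_sub _ _).trans (add_le_add (Real.abs_cos_le_one _) ?_)
    refine (Finset.abs_sum_le_sum_abs _ _).trans (Finset.sum_le_sum fun i _ => ?_)
    rw [abs_mul]
    exact mul_le_of_le_one_left (abs_nonneg _) (Real.abs_cos_le_one _)
  have hpos : ∀ r : ℝ, 0 < r → r < 1 → 0 ≤ ∑' k, l k * r ^ (k + 1) := by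
    intro r h0 h1
    have hS := ((hasSum_poisson h0 h1 θ).sub (hasSum_sum (s := Finset.range n)
      fun i _ => (hasSum_poisson h0 h1 (2 * π * y i)).mul_right (w i))).mul_left s
    have e : (fun k => l k * r ^ (k + 1)) = fun k : ℕ => s * (Real.cos (((k : ℝ) + 1) * θ) * r ^ (k + 1) -
        ∑ i ∈ Finset.range n, Real.cos (((k : ℝ) + 1) * (2 * π * y i)) * r ^ (k + 1) * w i) := by
      funext k
      rw [hl]
      simp only
      rw [mul_assoc, sub_mul, Finset.sum_mul]
      congr 2
      exact Finset.sum_congr rfl fun i _ => by ring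
    rw [e, hS.tsum_eq]
    obtain ⟨c, hc, h⟩ := interp_poisson hn h0 h1 x (fun _ => rfl)
    have h := h θ
    rw [heval] at h
    simp_rw [hxy] at h
    rw [h]
    have hd := poisson_denom_pos h0 h1 (Real.cos_le_one θ)
    have h2 : s * (c * Real.cos (n * θ) / (1 - 2 * r * Real.cos θ + r ^ 2)) =
        (s * Real.cos (2 * π * n * u)) * (c / (1 - 2 * r * Real.cos θ + r ^ 2)) := by
      rw [hθ, show (n:ℝ) * (2 * π * u) = 2 * π * n * u by ring]
      ring
    rw [h2]
    positivity
  have hfin := nonneg_tsum_div_sq l _ hbound hpos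
  have hS := ((hasSum_bernoulli_two hu).sub (hasSum_sum (s := Finset.range n)
      fun i hi => (hasSum_bernoulli_two (hyI i hi)).mul_right (w i))).mul_left s
  have e : (fun k : ℕ => l k * (1 / ((k : ℝ) + 1) ^ 2)) = fun k : ℕ =>
      s * (Real.cos (((k : ℝ) + 1) * θ) * (1 / ((k : ℝ) + 1) ^ 2) -
        ∑ i ∈ Finset.range n,
          Real.cos (((k : ℝ) + 1) * (2 * π * y i)) * (1 / ((k : ℝ) + 1) ^ 2) * w i) := by
    funext k
    rw [hl]
    simp only
    rw [mul_assoc, sub_mul, Finset.sum_mul]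
    congr 2
    exact Finset.sum_congr rfl fun i _ => by ring
  rw [e, hS.tsum_eq] at hfin
  have hI : (bernInterp n).eval (Real.cos θ) =
      ∑ i ∈ Finset.range n, bernoulliFun 2 (y i) * w i := heval _
  rw [hI]
  have h3 : s * (π ^ 2 * bernoulliFun 2 u -
      ∑ i ∈ Finset.range n, π ^ 2 * bernoulliFun 2 (y i) * w i) =
      π ^ 2 * (s * (bernoulliFun 2 u - ∑ i ∈ Finset.range n, bernoulliFun 2 (y i) * w i)) := by
    simp_rw [mul_assoc, ← Finset.mul_sum]
    ring
  rw [h3] at hfin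
  exact (mul_nonneg_iff_of_pos_left (by positivity)).1 hfin

lemma degree_bernInterp (n : ℕ) : (bernInterp n).degree < n := by
  have h := Lagrange.degree_interpolate_lt (s := Finset.range n)
    (v := fun i : ℕ => Real.cos ((2 * i + 1) * π / (2 * n)))
    (r := fun i : ℕ => bernoulliFun 2 ((2 * i + 1) / (4 * n)))
    ((Finset.range n).nodup_map_iff_injOn.mp (Polynomial.Chebyshev.roots_T_real_nodup n))
  rwa [Finset.card_range] at h

/-- A polynomial of degree less than `n` in `cos θ` is a cosine polynomial of degree less than `n`,
by expansion in Chebyshev polynomials. -/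
lemma exists_cos_sum (n : ℕ) : ∀ P : Polynomial ℝ, P.degree < n → ∃ a : ℕ → ℝ, ∀ θ : ℝ,
    P.eval (Real.cos θ) = ∑ j ∈ Finset.range n, a j * Real.cos (j * θ) := by
  induction n with
  | zero =>
    intro P hP
    have : P = 0 := by simpa using hP
    exact ⟨0, fun θ => by simp [this]⟩
  | succ n ih =>
    intro P hP
    set c : ℝ := P.coeff n / (T ℝ n).leadingCoeff with hc
    have hT0 : (T ℝ n).leadingCoeff ≠ 0 := by
      simp
    have hTn : (T ℝ n).natDegree = n := by simp
    have hdeg : (P - Polynomial.C c * T ℝ n).degree < n := by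
      rw [Polynomial.degree_lt_iff_coeff_zero]
      intro m hm
      rw [Polynomial.coeff_sub, Polynomial.coeff_C_mul]
      rcases hm.eq_or_lt with rfl | hlt
      · rw [hc, Polynomial.leadingCoeff, hTn, div_mul_cancel₀, sub_self]
        rwa [Polynomial.leadingCoeff, hTn] at hT0
      · rw [(Polynomial.degree_lt_iff_coeff_zero _ _).1 hP m hlt,
          Polynomial.coeff_eq_zero_of_natDegree_lt (by rwa [hTn])]
        simp
    obtain ⟨a, ha⟩ := ih _ hdeg
    refine ⟨fun j => if j = n then c else a j, fun θ => ?_⟩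
    simp only [Finset.sum_range_succ, if_true]
    have h1 := ha θ
    rw [Polynomial.eval_sub, Polynomial.eval_mul, Polynomial.eval_C, Polynomial.Chebyshev.T_real_cos,
      Int.cast_natCast, sub_eq_iff_eq_add] at h1
    rw [h1]
    congr 1
    refine Finset.sum_congr rfl fun j hj => ?_
    rw [if_neg (Finset.mem_range.1 hj).ne]

/-! ### The square wave -/

/-- The 1-periodic square wave `sgn cos (2πv)`, equal to `0` at the zeros of the cosine. -/
noncomputable def sqWave (v : ℝ) : ℝ := SignType.sign (Real.cos (2 * π * v))

lemma sqWave_periodic : Function.Periodic sqWave 1 := by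
  intro v
  unfold sqWave
  rw [show 2 * π * (v + 1) = 2 * π * v + 2 * π by ring, Real.cos_add_two_pi]

lemma sqWave_add_half (v : ℝ) : sqWave (v + 1 / 2) = -sqWave v := by
  unfold sqWave
  rw [show 2 * π * (v + 1 / 2) = 2 * π * v + π by ring, Real.cos_add_pi, Left.sign_neg]
  simp

lemma measurable_sqWave : Measurable sqWave := by
  have h : sqWave = fun v => if 0 < Real.cos (2 * π * v) then 1
      else if Real.cos (2 * π * v) < 0 then -1 else 0 := by
    funext v
    unfold sqWave
    rw [sign_apply]
    split_ifs <;> simp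
  rw [h]
  have hc : Continuous fun v : ℝ => Real.cos (2 * π * v) := by fun_prop
  exact Measurable.ite (measurableSet_lt measurable_const hc.measurable) measurable_const
    (Measurable.ite (measurableSet_lt hc.measurable measurable_const) measurable_const
      measurable_const)

lemma abs_sqWave_le (v : ℝ) : |sqWave v| ≤ 1 := by
  unfold sqWave
  rcases SignType.sign (Real.cos (2 * π * v)) with _ | _ | _ <;> simp

lemma intervalIntegrable_mul_sqWave {g : ℝ → ℝ} (hg : Continuous g) (c d a b : ℝ) :
    IntervalIntegrable (fun u => g u * sqWave (c * u + d)) volume a b := by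
  have h : IntervalIntegrable (fun u => sqWave (c * u + d)) volume a b := by
    refine (intervalIntegrable_const (c := (1:ℝ))).mono_fun
      (measurable_sqWave.comp (by fun_prop)).aestronglyMeasurable
      (Filter.Eventually.of_forall fun u => ?_)
    simpa using abs_sqWave_le (c * u + d)
  exact h.continuousOn_mul hg.continuousOn

lemma continuous_bernoulliFun_two : Continuous (bernoulliFun 2) := by
  have : bernoulliFun 2 = fun x => x ^ 2 - x + 6⁻¹ := funext bernoulliFun_two
  rw [this]
  fun_prop

lemma integral_bernoulli_sqWave : ∫ v in (0:ℝ)..1, bernoulliFun 2 v * sqWave v = 1 / 16 := by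
  have hI : ∀ a b : ℝ, IntervalIntegrable (fun v => bernoulliFun 2 v * sqWave v) volume a b := by
    intro a b
    simpa using intervalIntegrable_mul_sqWave continuous_bernoulliFun_two 1 0 a b
  have hA : ∀ a b : ℝ, ∫ v in a..b, bernoulliFun 2 v =
      (b ^ 3 / 3 - b ^ 2 / 2 + b / 6) - (a ^ 3 / 3 - a ^ 2 / 2 + a / 6) := by
    intro a b
    refine intervalIntegral.integral_eq_sub_of_hasDerivAt (f := fun v => v ^ 3 / 3 - v ^ 2 / 2 + v / 6) ?_
      (continuous_bernoulliFun_two.intervalIntegrable _ _)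
    intro x _
    rw [bernoulliFun_two]
    have := (((hasDerivAt_pow 3 x).div_const 3).sub ((hasDerivAt_pow 2 x).div_const 2)).add
      ((hasDerivAt_id x).div_const 6)
    convert! this using 1
    norm_num
  have hc : ∀ a b ε : ℝ, a ≤ b → (∀ v ∈ Set.Ioo a b, sqWave v = ε) →
      ∫ v in a..b, bernoulliFun 2 v * sqWave v = ε * ∫ v in a..b, bernoulliFun 2 v := by
    intro a b ε hab h
    rw [← intervalIntegral.integral_const_mul, intervalIntegral.integral_of_le hab,
      intervalIntegral.integral_of_le hab, integral_Ioc_eq_integral_Ioo, integral_Ioc_eq_integral_Ioo]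
    refine setIntegral_congr_fun measurableSet_Ioo fun v hv => ?_
    rw [h v hv, mul_comm]
  have h1 : ∀ v ∈ Set.Ioo (0:ℝ) (1/4), sqWave v = 1 := by
    intro v hv
    have : 0 < Real.cos (2 * π * v) := Real.cos_pos_of_mem_Ioo
      ⟨by nlinarith [Real.pi_pos, hv.1, hv.2], by nlinarith [Real.pi_pos, hv.1, hv.2]⟩
    simp [sqWave, sign_pos this]
  have h2 : ∀ v ∈ Set.Ioo (1/4:ℝ) (3/4), sqWave v = -1 := by
    intro v hv
    have : Real.cos (2 * π * v) < 0 := Real.cos_neg_of_pi_div_two_lt_of_lt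
      (by nlinarith [Real.pi_pos, hv.1, hv.2]) (by nlinarith [Real.pi_pos, hv.1, hv.2])
    simp [sqWave, sign_neg this]
  have h3 : ∀ v ∈ Set.Ioo (3/4:ℝ) 1, sqWave v = 1 := by
    intro v hv
    have : 0 < Real.cos (2 * π * v - 2 * π) := Real.cos_pos_of_mem_Ioo
      ⟨by nlinarith [Real.pi_pos, hv.1, hv.2], by nlinarith [Real.pi_pos, hv.1, hv.2]⟩
    rw [Real.cos_sub_two_pi] at this
    simp [sqWave, sign_pos this]
  rw [← intervalIntegral.integral_add_adjacent_intervals (hI 0 (1/4)) (hI (1/4) 1),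
    ← intervalIntegral.integral_add_adjacent_intervals (hI (1/4) (3/4)) (hI (3/4) 1),
    hc _ _ _ (by norm_num) h1, hc _ _ _ (by norm_num) h2, hc _ _ _ (by norm_num) h3, hA, hA, hA]
  norm_num

/-- The square wave of frequency `n`: cutting `[0, n]` into unit intervals and using the
multiplication formula `∑_{i < n} B₂ (v / n + i / n) = B₂ v / n` reduces to frequency one. -/
lemma integral_bernoulli_sqWave_mul {n : ℕ} (hn : 1 ≤ n) :
    ∫ u in (0:ℝ)..1, bernoulliFun 2 u * sqWave (n * u) = 1 / (16 * (n:ℝ) ^ 2) := by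
  have hn0 : (n : ℝ) ≠ 0 := by positivity
  have h1 : ∫ u in (0:ℝ)..1, bernoulliFun 2 u * sqWave (n * u) =
      (n:ℝ)⁻¹ * ∫ v in (0:ℝ)..n, bernoulliFun 2 (v / n) * sqWave v := by
    have := intervalIntegral.integral_comp_mul_left (a := 0) (b := 1)
      (fun v : ℝ => bernoulliFun 2 (v / n) * sqWave v) hn0
    simp only [mul_zero, mul_one, smul_eq_mul] at this
    rw [← this]
    congr 1
    funext u
    rw [mul_div_cancel_left₀ _ hn0]
  have hI : ∀ i : ℕ, ∀ a b : ℝ, IntervalIntegrable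
      (fun v : ℝ => bernoulliFun 2 (v / n + i / n) * sqWave v) volume a b := by
    intro i a b
    simpa using intervalIntegrable_mul_sqWave
      (g := fun v : ℝ => bernoulliFun 2 (v / n + i / n))
      (continuous_bernoulliFun_two.comp (by fun_prop)) 1 0 a b
  have h2 : ∫ v in (0:ℝ)..n, bernoulliFun 2 (v / n) * sqWave v =
      ∑ i ∈ Finset.range n, ∫ v in (0:ℝ)..1, bernoulliFun 2 (v / n + i / n) * sqWave v := by
    have := intervalIntegral.sum_integral_adjacent_intervals (n := n) (a := fun i : ℕ => (i:ℝ))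
      (f := fun v : ℝ => bernoulliFun 2 (v / n) * sqWave v) (μ := volume)
      (fun k _ => by simpa using hI 0 k (k + 1 : ℕ))
    simp only [Nat.cast_zero] at this
    rw [← this]
    refine Finset.sum_congr rfl fun i _ => ?_
    have h3 := intervalIntegral.integral_comp_add_right (a := 0) (b := 1)
      (fun v : ℝ => bernoulliFun 2 (v / n) * sqWave v) (i:ℝ)
    rw [zero_add, add_comm (1:ℝ)] at h3
    push_cast
    rw [← h3]
    congr 1
    funext v
    have h4 := sqWave_periodic.nat_mul i v
    rw [mul_one] at h4
    rw [h4, add_div]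
  rw [h1, h2, ← intervalIntegral.integral_finsetSum (fun i _ => hI i 0 1)]
  have h5 : ∀ v : ℝ, ∑ i ∈ Finset.range n, bernoulliFun 2 (v / n + i / n) * sqWave v =
      (n:ℝ)⁻¹ * (bernoulliFun 2 v * sqWave v) := by
    intro v
    have := bernoulliFun_mul 2 (m := n) (by omega) (v / n)
    rw [mul_div_cancel₀ _ hn0] at this
    rw [this, ← Finset.sum_mul]
    field_simp
  simp_rw [h5]
  rw [intervalIntegral.integral_const_mul, integral_bernoulli_sqWave]
  field_simp

/-- The square wave of frequency `n` is orthogonal to all lower cosines. A shift by `1 / (2 n)` changes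
its sign and rotates the pair of cosine and sine integrals of frequency `j` by the angle
`φ = π j / n < π`, so `-1` would be an eigenvalue of that rotation if the pair were nonzero. -/
lemma integral_cos_sqWave {n j : ℕ} (hn : 1 ≤ n) (hj : j < n) :
    ∫ u in (0:ℝ)..1, Real.cos (j * (2 * π * u)) * sqWave (n * u) = 0 := by
  have hn0 : (0 : ℝ) < n := by positivity
  set δ : ℝ := 1 / (2 * n) with hδ
  set φ : ℝ := π * j / n with hφ
  -- Translating by `δ`, half a period of `sqWave (n * u)`, flips the sign of the square wave.
  have shift : ∀ g : ℝ → ℝ, Function.Periodic g 1 →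
      ∫ u in (0:ℝ)..1, g u * sqWave (n * u) = -∫ u in (0:ℝ)..1, g (u + δ) * sqWave (n * u) := by
    intro g hg
    have hp : Function.Periodic (fun u => g u * sqWave (n * u)) 1 := by
      intro u
      have h4 := sqWave_periodic.nat_mul n (n * u)
      simp only
      rw [hg u, mul_add, h4]
    have h1 := hp.intervalIntegral_add_eq 0 δ
    rw [zero_add] at h1
    have h2 := intervalIntegral.integral_comp_add_right (a := 0) (b := 1)
      (fun u => g u * sqWave (n * u)) δ
    rw [zero_add, add_comm (1:ℝ)] at h2
    rw [h1, ← h2, ← intervalIntegral.integral_neg]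
    congr 1
    funext u
    rw [show (n:ℝ) * (u + δ) = n * u + 1 / 2 by rw [hδ]; field_simp, sqWave_add_half]
    ring
  have hper : ∀ u : ℝ, (j:ℝ) * (2 * π * (u + 1)) = j * (2 * π * u) + j * (2 * π) := fun u => by ring
  have hsh : ∀ u : ℝ, (j:ℝ) * (2 * π * (u + δ)) = j * (2 * π * u) + φ := fun u => by
    rw [hδ, hφ]; field_simp
  have hic := intervalIntegrable_mul_sqWave
    (g := fun u : ℝ => Real.cos (j * (2 * π * u))) (by fun_prop) n 0 0 1
  have his := intervalIntegrable_mul_sqWave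
    (g := fun u : ℝ => Real.sin (j * (2 * π * u))) (by fun_prop) n 0 0 1
  simp only [add_zero] at hic his
  have hc := shift (fun u => Real.cos (j * (2 * π * u))) (fun u => by
    simp only
    rw [hper, Real.cos_add_nat_mul_two_pi])
  have hs := shift (fun u => Real.sin (j * (2 * π * u))) (fun u => by
    simp only
    rw [hper, Real.sin_add_nat_mul_two_pi])
  simp only [hsh] at hc hs
  have ec : ∀ u : ℝ, Real.cos (j * (2 * π * u) + φ) * sqWave (n * u) =
      Real.cos φ * (Real.cos (j * (2 * π * u)) * sqWave (n * u)) -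
      Real.sin φ * (Real.sin (j * (2 * π * u)) * sqWave (n * u)) := fun u => by
    rw [Real.cos_add]; ring
  have es : ∀ u : ℝ, Real.sin (j * (2 * π * u) + φ) * sqWave (n * u) =
      Real.cos φ * (Real.sin (j * (2 * π * u)) * sqWave (n * u)) +
      Real.sin φ * (Real.cos (j * (2 * π * u)) * sqWave (n * u)) := fun u => by
    rw [Real.sin_add]; ring
  simp_rw [ec] at hc
  simp_rw [es] at hs
  rw [intervalIntegral.integral_sub (hic.const_mul _) (his.const_mul _),
    intervalIntegral.integral_const_mul, intervalIntegral.integral_const_mul] at hc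
  rw [intervalIntegral.integral_add (his.const_mul _) (hic.const_mul _),
    intervalIntegral.integral_const_mul, intervalIntegral.integral_const_mul] at hs
  have hφ1 : -1 < Real.cos φ := by
    rw [← Real.cos_pi]
    have : φ < π := by
      rw [hφ, div_lt_iff₀ hn0]
      have : (j:ℝ) < n := by exact_mod_cast hj
      nlinarith [Real.pi_pos]
    exact Real.cos_lt_cos_of_nonneg_of_le_pi (by positivity) le_rfl this
  generalize (∫ u in (0:ℝ)..1, Real.cos (j * (2 * π * u)) * sqWave (n * u)) = A at *
  generalize (∫ u in (0:ℝ)..1, Real.sin (j * (2 * π * u)) * sqWave (n * u)) = B at *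
  have hA : ((1 + Real.cos φ) ^ 2 + Real.sin φ ^ 2) * A = 0 := by
    linear_combination (1 + Real.cos φ) * hc + Real.sin φ * hs
  rcases mul_eq_zero.1 hA with h | h
  · nlinarith [sq_nonneg (Real.sin φ), sq_pos_of_pos (by linarith : 0 < 1 + Real.cos φ)]
  · exact h

/-- The `L¹` distance of `B₂` from its interpolant: by `bernInterp_sign` the absolute value is the
product with the square wave, and by orthogonality the interpolant does not contribute. -/
lemma integral_abs_bernoulli_sub {n : ℕ} (hn : 1 ≤ n) :
    ∫ u in (0:ℝ)..1, |bernoulliFun 2 u - (bernInterp n).eval (Real.cos (2 * π * u))| =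
      1 / (16 * (n:ℝ) ^ 2) := by
  obtain ⟨a, ha⟩ := exists_cos_sum n _ (degree_bernInterp n)
  have hTc : Continuous fun u : ℝ => (bernInterp n).eval (Real.cos (2 * π * u)) := by fun_prop
  have hT : ∫ u in (0:ℝ)..1, (bernInterp n).eval (Real.cos (2 * π * u)) * sqWave (n * u) = 0 := by
    simp_rw [ha, Finset.sum_mul, mul_assoc (a _)]
    rw [intervalIntegral.integral_finsetSum]
    · refine Finset.sum_eq_zero fun j hj => ?_
      rw [intervalIntegral.integral_const_mul, integral_cos_sqWave hn (Finset.mem_range.1 hj), mul_zero]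
    · intro j _
      have := intervalIntegrable_mul_sqWave
        (g := fun u : ℝ => Real.cos (j * (2 * π * u))) (by fun_prop) n 0 0 1
      simp only [add_zero] at this
      exact this.const_mul _
  have h1 := intervalIntegrable_mul_sqWave continuous_bernoulliFun_two n 0 0 1
  have h2 := intervalIntegrable_mul_sqWave hTc n 0 0 1
  simp only [add_zero] at h1 h2
  have h3 := intervalIntegral.integral_sub h1 h2
  rw [hT, sub_zero, integral_bernoulli_sqWave_mul hn] at h3
  rw [← h3]
  refine intervalIntegral.integral_congr fun u hu => ?_
  rw [Set.uIcc_of_le zero_le_one] at hu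
  have key := fun s hs => bernInterp_sign hn hu (s := s) hs
  simp only [← sub_mul]
  unfold sqWave
  rw [← mul_assoc (2 * π)]
  rcases lt_trichotomy (Real.cos (2 * π * n * u)) 0 with h | h | h
  · have := key (-1) (by linarith)
    rw [sign_neg h, abs_of_nonpos (by linarith)]
    simp
  · have h3 := key 1 (by rw [h]; simp)
    have h4 := key (-1) (by rw [h]; simp)
    rw [h, show bernoulliFun 2 u - (bernInterp n).eval (Real.cos (2 * π * u)) = 0 by linarith]
    simp
  · have := key 1 (by linarith)
    rw [sign_pos h, abs_of_nonneg (by linarith)]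
    simp

/-! ### The Favard inequality -/

/-- Representation of a periodic `C²` function by convolution of its second derivative with `B₂`
over one period, from two integrations by parts. -/
lemma eq_integral_add_integral_deriv2 {f : ℝ → ℝ} (hf : ContDiff ℝ 2 f)
    (hper : Function.Periodic f 1) (t : ℝ) :
    f t = (∫ v in (0:ℝ)..1, f v) -
      1 / 2 * ∫ u in (0:ℝ)..1, bernoulliFun 2 u * iteratedDeriv 2 f (t - u) := by
  have hd1 : ∀ x, HasDerivAt f (deriv f x) x := fun x =>
    ((hf.differentiable (by norm_num)) x).hasDerivAt
  have hf1 : ContDiff ℝ 1 (deriv f) := by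
    have := (contDiff_succ_iff_deriv (n := 1) (f := f) (𝕜 := ℝ)).1 (by exact_mod_cast hf)
    exact this.2.2
  have e2 : iteratedDeriv 2 f = deriv (deriv f) := by
    rw [iteratedDeriv_succ, iteratedDeriv_one]
  have hd2 : ∀ x, HasDerivAt (deriv f) (iteratedDeriv 2 f x) x := fun x => by
    rw [e2]
    exact ((hf1.differentiable (by norm_num)) x).hasDerivAt
  have hc2 : Continuous (iteratedDeriv 2 f) := hf.continuous_iteratedDeriv 2 (by norm_num)
  have hper1 : ∀ x, deriv f (x - 1) = deriv f x := by
    intro x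
    rw [← deriv_comp_sub_const]
    congr 1
    funext y
    exact hper.sub_eq y
  have hsub : ∀ x : ℝ, HasDerivAt (fun u : ℝ => t - u) (-1) x := fun x => by
    simpa using (hasDerivAt_id x).const_sub t
  have hb2 : ∀ x, HasDerivAt (bernoulliFun 2) (2 * x - 1) x := by
    intro x
    have h : bernoulliFun 2 = fun x => x ^ 2 - x + 6⁻¹ := funext bernoulliFun_two
    rw [h]
    have := ((hasDerivAt_pow 2 x).sub (hasDerivAt_id x)).add_const (6⁻¹ : ℝ)
    convert! this using 1
    norm_num
  have hb1 : ∀ x : ℝ, HasDerivAt (fun x : ℝ => 2 * x - 1) 2 x := fun x => by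
    simpa using ((hasDerivAt_id x).const_mul 2).sub_const 1
  have i1 := intervalIntegral.integral_mul_deriv_eq_deriv_mul (a := 0) (b := 1)
    (u := bernoulliFun 2) (u' := fun x => 2 * x - 1)
    (v := fun u => -deriv f (t - u)) (v' := fun u => iteratedDeriv 2 f (t - u))
    (fun x _ => hb2 x)
    (fun x _ => by
      have := ((hd2 (t - x)).comp x (hsub x)).neg
      convert! this using 1
      ring)
    ((by fun_prop : Continuous fun x : ℝ => 2 * x - 1).intervalIntegrable _ _)
    ((hc2.comp (by fun_prop)).intervalIntegrable _ _)
  have i2 := intervalIntegral.integral_mul_deriv_eq_deriv_mul (a := 0) (b := 1)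
    (u := fun x : ℝ => 2 * x - 1) (u' := fun x => 2)
    (v := fun u => f (t - u)) (v' := fun u => -deriv f (t - u))
    (fun x _ => hb1 x)
    (fun x _ => by
      have := (hd1 (t - x)).comp x (hsub x)
      convert! this using 1
      ring)
    (continuous_const.intervalIntegrable _ _)
    ((hf1.continuous.comp (by fun_prop)).neg.intervalIntegrable _ _)
  have i3 : ∫ u in (0:ℝ)..1, f (t - u) = ∫ v in (0:ℝ)..1, f v := by
    rw [intervalIntegral.integral_comp_sub_left (fun x => f x) t]
    have := hper.intervalIntegral_add_eq (t - 1) 0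
    simpa using this
  rw [i1, i2, intervalIntegral.integral_const_mul, i3, hper.sub_eq, hper1]
  simp only [bernoulliFun_two, sub_zero]
  ring

/-- A constant plus the convolution of a cosine polynomial of degree less than `n` with a periodic
function is a trigonometric polynomial of degree less than `n`. -/
lemma isTrigPoly_conv {n : ℕ} (hn : 1 ≤ n) (A : ℝ) (a : ℕ → ℝ) {g : ℝ → ℝ} (hg : Continuous g)
    (hper : Function.Periodic g 1) :
    IsTrigPolyDegLT n (fun t => A - 1 / 2 * ∫ u in (0:ℝ)..1,
      (∑ j ∈ Finset.range n, a j * Real.cos (j * (2 * π * u))) * g (t - u)) := by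
  refine ⟨fun j => (if j = 0 then A else 0) - 1 / 2 * (a j * ∫ v in (0:ℝ)..1,
      Real.cos (2 * π * j * v) * g v),
    fun j => - (1 / 2) * (a j * ∫ v in (0:ℝ)..1, Real.sin (2 * π * j * v) * g v), fun t => ?_⟩
  have h1 : ∀ j : ℕ, ∫ u in (0:ℝ)..1, Real.cos (j * (2 * π * u)) * g (t - u) =
      Real.cos (2 * π * j * t) * (∫ v in (0:ℝ)..1, Real.cos (2 * π * j * v) * g v) +
      Real.sin (2 * π * j * t) * (∫ v in (0:ℝ)..1, Real.sin (2 * π * j * v) * g v) := by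
    intro j
    have e1 := intervalIntegral.integral_comp_sub_left (a := 0) (b := 1)
      (fun v => Real.cos (j * (2 * π * (t - v))) * g v) t
    simp only [sub_sub_cancel, sub_zero] at e1
    have hp : Function.Periodic (fun v => Real.cos (j * (2 * π * (t - v))) * g v) 1 := by
      intro v
      simp only
      rw [hper v, show (j:ℝ) * (2 * π * (t - (v + 1))) = j * (2 * π * (t - v)) - j * (2 * π) by ring,
        Real.cos_sub_nat_mul_two_pi]
    have e2 := hp.intervalIntegral_add_eq (t - 1) 0
    rw [sub_add_cancel, zero_add] at e2
    rw [e1, e2, ← intervalIntegral.integral_const_mul, ← intervalIntegral.integral_const_mul,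
      ← intervalIntegral.integral_add]
    · refine intervalIntegral.integral_congr fun v _ => ?_
      rw [show (j:ℝ) * (2 * π * (t - v)) = 2 * π * j * t - 2 * π * j * v by ring, Real.cos_sub]
      ring
    · exact Continuous.intervalIntegrable (by fun_prop) _ _
    · exact Continuous.intervalIntegrable (by fun_prop) _ _
  simp_rw [Finset.sum_mul, mul_assoc (a _)]
  rw [intervalIntegral.integral_finsetSum
    (fun j _ => Continuous.intervalIntegrable (by fun_prop) _ _)]
  simp_rw [intervalIntegral.integral_const_mul, h1]
  have hA : A = ∑ j ∈ Finset.range n, (if j = 0 then A else 0) * Real.cos (2 * π * j * t) := by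
    rw [Finset.sum_eq_single 0]
    · simp
    · intro j _ hj
      simp [hj]
    · intro h
      exact absurd (Finset.mem_range.2 (by omega)) h
  conv_lhs => rw [hA]
  rw [Finset.mul_sum, ← Finset.sum_sub_distrib]
  refine Finset.sum_congr rfl fun j _ => ?_
  ring

/-- The sharp inequality `E_{n-1}(f) ≤ ‖D²f‖ / (32 n²)`. -/
lemma favard {f : ℝ → ℝ} (hf : ContDiff ℝ 2 f) (hper : Function.Periodic f 1) {n : ℕ}
    (hn : 1 ≤ n) : bestApprox n f ≤ 1 / (32 * (n : ℝ) ^ 2) * unorm (iteratedDeriv 2 f) := by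
  set g := iteratedDeriv 2 f with hg
  have hgc : Continuous g := hf.continuous_iteratedDeriv 2 (by norm_num)
  have hgp : Function.Periodic g 1 := by
    intro x
    have h := congrFun (iteratedDeriv_comp_add_const 2 f 1) x
    rw [show (fun z => f (z + 1)) = f from funext hper] at h
    exact h.symm
  have hgb : ∀ x, |g x| ≤ unorm g := by
    have hb : BddAbove (Set.range fun x => |g x|) := by
      have := Function.Periodic.compact_of_continuous (f := fun x => |g x|) (c := 1)
        (fun x => by simp only [hgp x]) one_ne_zero hgc.abs
      exact this.bddAbove
    exact fun x => le_ciSup hb x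
  obtain ⟨a, ha⟩ := exists_cos_sum n _ (degree_bernInterp n)
  have hτ := isTrigPoly_conv hn (∫ v in (0:ℝ)..1, f v) a hgc hgp
  simp_rw [← ha] at hτ
  have hTc : Continuous fun u : ℝ => (bernInterp n).eval (Real.cos (2 * π * u)) := by fun_prop
  have hbd : BddBelow (Set.range fun τ : {τ : ℝ → ℝ // IsTrigPolyDegLT n τ} =>
      unorm (fun t => f t - τ.1 t)) := by
    refine ⟨0, ?_⟩
    rintro _ ⟨τ, rfl⟩
    exact Real.iSup_nonneg fun _ => abs_nonneg _
  refine (ciInf_le hbd ⟨_, hτ⟩).trans (ciSup_le fun t => ?_)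
  have hgt : Continuous fun u => g (t - u) := hgc.comp (by fun_prop)
  have hb := continuous_bernoulliFun_two
  have hI1 : IntervalIntegrable (fun u => bernoulliFun 2 u * g (t - u)) volume 0 1 :=
    (hb.mul hgt).intervalIntegrable _ _
  have hI2 : IntervalIntegrable (fun u => (bernInterp n).eval (Real.cos (2 * π * u)) * g (t - u))
      volume 0 1 := (hTc.mul hgt).intervalIntegrable _ _
  simp only
  rw [eq_integral_add_integral_deriv2 hf hper t, ← hg]
  have e : ∀ I A B : ℝ, I - 1 / 2 * A - (I - 1 / 2 * B) = -(1 / 2 * (A - B)) := fun I A B => by ring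
  rw [e, abs_neg, abs_mul, ← intervalIntegral.integral_sub hI1 hI2]
  have h2 : |∫ u in (0:ℝ)..1, (bernoulliFun 2 u * g (t - u) -
      (bernInterp n).eval (Real.cos (2 * π * u)) * g (t - u))| ≤
      1 / (16 * (n:ℝ) ^ 2) * unorm g := by
    rw [← integral_abs_bernoulli_sub hn, ← intervalIntegral.integral_mul_const]
    refine (intervalIntegral.abs_integral_le_integral_abs zero_le_one).trans ?_
    refine intervalIntegral.integral_mono_on zero_le_one
      (((hI1.sub hI2)).abs) (Continuous.intervalIntegrable (by fun_prop) _ _) fun u _ => ?_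
    rw [← sub_mul, abs_mul]
    exact mul_le_mul_of_nonneg_left (hgb _) (abs_nonneg _)
  rw [abs_of_pos (by norm_num : (0:ℝ) < 1 / 2)]
  calc 1 / 2 * _ ≤ 1 / 2 * (1 / (16 * (n:ℝ) ^ 2) * unorm g) := by gcongr
    _ = _ := by ring

/-- Weak Favard-type inequality: for `f ∈ C²(𝕋)`,
`E_{n-1}(f) ≤ (1/(32n²))·(1 + 2α²/3)·‖D²f‖`. -/
theorem stmt19 (f : ℝ → ℝ) (hf : ContDiff ℝ 2 f) (hper : Function.Periodic f 1)
    (α : ℝ) (hα : 0 < α) (n : ℕ) (hn : 1 ≤ n) :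
    bestApprox n f ≤ (1 / (32 * (n : ℝ)^2)) * (1 + 2 * α^2 / 3) * unorm (iteratedDeriv 2 f) := by
  refine (favard hf hper hn).trans ?_
  have : 0 ≤ unorm (iteratedDeriv 2 f) := Real.iSup_nonneg fun _ => abs_nonneg _
  gcongr
  refine le_mul_of_one_le_right (by positivity) ?_
  have : 0 ≤ 2 * α ^ 2 / 3 := by positivity
  linarith
end
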